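/- arXiv:0806.3422 — 2 statements merged into one kernel-verified Lean document; each statement's English description precedes it below -/
import Mathlib

section
/- Let u : ℤ → ℝ be a grid function such that the sequence of differences j ↦ u(j+1) − u(j) is summable, and let C⁺, C⁻ : ℤ → ℝ satisfy C⁺(j) ≥ 0, C⁻(j) ≥ 0 and C⁺(j) + C⁻(j) ≤ 1 for every j ∈ ℤ. Define the updated grid function w : ℤ → ℝ by w(j) = u(j) + C⁺(j)·(u(j+1) − u(j)) − C⁻(j−1)·(u(j) − u(j−1)). Then the sequence j ↦ w(j+1) − w(j) is summable and the total variation does not increase: ∑_{j∈ℤ} |w(j+1) − w(j)| ≤ ∑_{j∈ℤ} |u(j+1) − u(j)|. -/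
/-!
The increments of `w` arise from those of `u` by a redistribution: the increment at `j` keeps the
fraction `1 - C⁺(j) - C⁻(j)`, sends `C⁺(j)` to its left neighbour and `C⁻(j)` to its right one.
The hypotheses say exactly that these three weights are nonnegative with sum `1`, so no `ℓ¹` mass
is created.
-/

open scoped fwdDiff

section Redistribution

variable {ι κ R E : Type*} [Fintype κ]

theorem hasSum_sum_comp_equiv {ι' M : Type*} [AddCommMonoid M] [TopologicalSpace M]
    [ContinuousAdd M] [T2Space M] (σ : κ → ι ≃ ι') {f : κ → ι' → M}
    (hf : ∀ k, Summable (f k)) :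
    HasSum (fun i => ∑ k, f k (σ k i)) (∑' j, ∑ k, f k j) := by
  rw [Summable.tsum_finsetSum fun k _ => hf k]
  exact hasSum_sum fun k _ => (σ k).hasSum_iff.2 (hf k).hasSum

/-- The family obtained from `d` by moving, for each `k`, the share `a k j • d j` of the entry at
`j` to the position `(σ k)⁻¹ j`. Indexing the weights by the source `j` makes conservation of mass
a condition on `∑ k, ‖a k j‖` at each `j`. -/
def redistribute [AddCommMonoid E] [SMul R E]
    (σ : κ → Equiv.Perm ι) (a : κ → ι → R) (d : ι → E) (i : ι) : E :=
  ∑ k, a k (σ k i) • d (σ k i)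

variable [SeminormedRing R] [SeminormedAddCommGroup E] [Module R E] [IsBoundedSMul R E]
  (σ : κ → Equiv.Perm ι) {a : κ → ι → R} {d : ι → E}

theorem norm_redistribute_le (i : ι) :
    ‖redistribute σ a d i‖ ≤ ∑ k, ‖a k (σ k i)‖ * ‖d (σ k i)‖ :=
  norm_sum_le_of_le _ fun _ _ => norm_smul_le _ _

theorem summable_norm_redistribute_and_tsum_le (hd : Summable fun i => ‖d i‖)
    (ha : ∀ i, ∑ k, ‖a k i‖ ≤ 1) :
    (Summable fun i => ‖redistribute σ a d i‖) ∧
      ∑' i, ‖redistribute σ a d i‖ ≤ ∑' i, ‖d i‖ := by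
  have weight_le_one (k : κ) (i : ι) : ‖a k i‖ ≤ 1 :=
    (Finset.single_le_sum (fun k _ => norm_nonneg (a k i)) (Finset.mem_univ k)).trans (ha i)
  have share_summable (k : κ) : Summable fun i => ‖a k i‖ * ‖d i‖ :=
    hd.of_nonneg_of_le (fun _ => by positivity)
      fun i => mul_le_of_le_one_left (norm_nonneg _) (weight_le_one k i)
  have shares_le (i : ι) : ∑ k, ‖a k i‖ * ‖d i‖ ≤ ‖d i‖ := by
    rw [← Finset.sum_mul]
    exact mul_le_of_le_one_left (norm_nonneg _) (ha i)
  have majorant := hasSum_sum_comp_equiv σ share_summable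
  have norm_summable : Summable fun i => ‖redistribute σ a d i‖ :=
    majorant.summable.of_nonneg_of_le (fun _ => norm_nonneg _) (norm_redistribute_le σ)
  refine ⟨norm_summable, ?_⟩
  calc ∑' i, ‖redistribute σ a d i‖
      ≤ ∑' i, ∑ k, ‖a k i‖ * ‖d i‖ :=
        hasSum_le (norm_redistribute_le σ) norm_summable.hasSum majorant
    _ ≤ ∑' i, ‖d i‖ :=
        (summable_sum fun k _ => share_summable k).tsum_le_tsum shares_le hd

end Redistribution

section IncrementalScheme

variable {G E : Type*} [AddCommGroup G]

/-- One step of a finite-difference scheme in incremental form, on a grid `G` with spacing `h`. As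
in Harten's convention, `Cm (j - h)` multiplies the difference between `j - h` and `j`, so that
`Cp j` and `Cm j` both belong to the cell from `j` to `j + h`. -/
def incrementalStep {R : Type*} [Ring R] [AddCommGroup E] [Module R E]
    (h : G) (Cp Cm : G → R) (u : G → E) (j : G) : E :=
  u j + Cp j • (u (j + h) - u j) - Cm (j - h) • (u j - u (j - h))

theorem fwdDiff_incrementalStep {R : Type*} [Ring R] [AddCommGroup E] [Module R E]
    (h : G) (Cp Cm : G → R) (u : G → E) :
    Δ_[h] (incrementalStep h Cp Cm u) =
      redistribute ![1, Equiv.addRight h, Equiv.subRight h] ![1 - Cp - Cm, Cp, Cm] (Δ_[h] u) := by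
  ext j
  simp only [fwdDiff, incrementalStep, redistribute, Fin.sum_univ_three, Matrix.cons_val,
    Equiv.Perm.one_apply, Equiv.coe_addRight, Equiv.subRight_apply, Pi.sub_apply, Pi.one_apply,
    add_sub_cancel_right, sub_add_cancel, sub_smul, one_smul]
  abel

theorem harten_tvd_general [SeminormedAddCommGroup E] [NormedSpace ℝ E] (h : G) (u : G → E)
    (Cp Cm : G → ℝ) (hu : Summable fun j => ‖Δ_[h] u j‖) (hCp : ∀ j, 0 ≤ Cp j)
    (hCm : ∀ j, 0 ≤ Cm j) (hsum : ∀ j, Cp j + Cm j ≤ 1) :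
    (Summable fun j => ‖Δ_[h] (incrementalStep h Cp Cm u) j‖) ∧
      ∑' j, ‖Δ_[h] (incrementalStep h Cp Cm u) j‖ ≤ ∑' j, ‖Δ_[h] u j‖ := by
  rw [fwdDiff_incrementalStep]
  refine summable_norm_redistribute_and_tsum_le _ hu fun j => le_of_eq ?_
  have remainder_nonneg : 0 ≤ 1 - Cp j - Cm j := by linarith [hsum j]
  simp only [Fin.sum_univ_three, Matrix.cons_val, Pi.sub_apply, Pi.one_apply,
    Real.norm_of_nonneg remainder_nonneg, Real.norm_of_nonneg (hCp j),
    Real.norm_of_nonneg (hCm j)]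
  ring

end IncrementalScheme

/-- Harten's lemma: a scheme in incremental form with nonnegative coefficients
whose sum is at most 1 is total-variation diminishing. -/
theorem harten_tvd (u w Cp Cm : ℤ → ℝ)
    (hu : Summable (fun j : ℤ => |u (j + 1) - u j|))
    (hCp : ∀ j : ℤ, 0 ≤ Cp j) (hCm : ∀ j : ℤ, 0 ≤ Cm j)
    (hsum : ∀ j : ℤ, Cp j + Cm j ≤ 1)
    (hw : ∀ j : ℤ, w j = u j + Cp j * (u (j + 1) - u j) - Cm (j - 1) * (u j - u (j - 1))) :
    Summable (fun j : ℤ => |w (j + 1) - w j|) ∧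
      (∑' j : ℤ, |w (j + 1) - w j|) ≤ ∑' j : ℤ, |u (j + 1) - u j| := by
  obtain rfl : w = incrementalStep 1 Cp Cm u := funext hw
  exact harten_tvd_general 1 u Cp Cm hu hCp hCm hsum
end

section
/- Let s ≥ 1, h > 0, a ∈ ℝ, and consider the 2s equispaced nodes x_i = a + i·h for i ∈ {−s, …, s−1} with arbitrary values u_{−s}, …, u_{s−1} ∈ ℝ. Let q be the unique polynomial of degree at most 2s − 1 with q(x_i) = u_i for each i. Then the value of q at the midpoint m = a − h/2 of [x_{−1}, x₀] is q(m) = ∑_{l=1}^{s} β_l (u_{l−1} + u_{−l}), where β_l = (−1)^{l+1} · (2l−1) · (∏_{m=1, m≠l}^{s} (2m−1)²) / (2^{2s−1} · (s+l−1)! · (s−l)!). -/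
/-!
In barycentric form the Lagrange basis polynomial at a node `xᵢ` takes the value
`ω(m) · wᵢ / (m - xᵢ)` at the midpoint `m`, where `ω = ∏ⱼ (X - xⱼ)` and
`wᵢ = ∏_{j ≠ i} (xᵢ - xⱼ)⁻¹`. On equispaced nodes `wᵢ` is a signed reciprocal of a product of two
factorials, and pairing the nodes symmetric about `m` evaluates `ω(m)`. Reflection in `m` exchanges
`x_{l-1}` and `x_{-l}`; it changes the sign of both `wᵢ` and `m - xᵢ`, so the two coefficients are
equal.
-/

section IntervalProducts

open Finset

@[to_additive]
lemma prod_Ico_neg_eq_prod_Icc_mul {M : Type*} [CommMonoid M] (f : ℤ → M) (s : ℕ) :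
    ∏ i ∈ Ico (-(s : ℤ)) s, f i = ∏ l ∈ Icc 1 s, f ((l : ℤ) - 1) * f (-(l : ℤ)) := by
  induction s with
  | zero => simp
  | succ s ih =>
    have hIco : Ico (-((s + 1 : ℕ) : ℤ)) (s + 1 : ℕ) =
        insert (s : ℤ) (insert (-((s + 1 : ℕ) : ℤ)) (Ico (-(s : ℤ)) s)) := by
      ext i
      simp only [mem_insert, mem_Ico]
      omega
    rw [hIco, prod_insert (by simp only [mem_insert, mem_Ico]; omega),
      prod_insert (by simp only [mem_Ico]; omega), ih,
      prod_Icc_succ_top (Nat.le_add_left 1 s), ← mul_assoc, mul_comm]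
    simp

lemma prod_Ico_erase_intCast_sub {R : Type*} [CommRing R] {m n i : ℤ} {p q : ℕ}
    (hp : (p : ℤ) = i - m) (hq : (q : ℤ) = n - 1 - i) :
    ∏ j ∈ (Ico m n).erase i, ((i : R) - j) = (-1) ^ q * p.factorial * q.factorial := by
  induction p generalizing m with
  | zero =>
    induction q generalizing n with
    | zero =>
      have hsingleton : Ico m n = {i} := by
        ext j
        simp only [mem_Ico, mem_singleton]
        omega
      simp [hsingleton]
    | succ q ih =>
      have hsplit : (Ico m n).erase i = insert (i + q + 1) ((Ico m (n - 1)).erase i) := by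
        ext j
        simp only [mem_insert, mem_erase, mem_Ico]
        omega
      rw [hsplit, prod_insert (by simp only [mem_erase, mem_Ico]; omega), ih (by omega),
        Nat.factorial_succ]
      push_cast
      ring
  | succ p ih =>
    have hsplit : (Ico m n).erase i = insert (i - p - 1) ((Ico (m + 1) n).erase i) := by
      ext j
      simp only [mem_insert, mem_erase, mem_Ico]
      omega
    rw [hsplit, prod_insert (by simp only [mem_erase, mem_Ico]; omega), ih (by omega),
      Nat.factorial_succ]
    push_cast
    ring

end IntervalProducts

section EquispacedInterpolation

open Finset Polynomial

variable {K : Type*} [Field K]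

/-- The node `xᵢ = a + i h` of the equispaced grid with origin `a` and step `h`, for any integer
index `i`. -/
def equispacedNode (a h : K) (i : ℤ) : K := a + i * h

/-- The coefficient `βₗ` of the symmetric pair `u_{l-1} + u_{-l}` in the central interpolation on
`2 s` nodes; it is meaningful for `1 ≤ l ≤ s`, where no subtraction of naturals is truncated. -/
def centralMidpointCoeff (K : Type*) [Field K] (s l : ℕ) : K :=
  (-1 : K) ^ (l + 1) * (2 * (l : K) - 1) *
      (∏ m ∈ (Icc 1 s).erase l, (2 * (m : K) - 1) ^ 2) /
    (2 ^ (2 * s - 1) * (Nat.factorial (s + l - 1) : K) * (Nat.factorial (s - l) : K))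

lemma nodalWeight_equispacedNode (a h : K) {m n i : ℤ} {p q : ℕ}
    (hp : (p : ℤ) = i - m) (hq : (q : ℤ) = n - 1 - i) :
    Lagrange.nodalWeight (Ico m n) (equispacedNode a h) i =
      ((-1) ^ q * p.factorial * q.factorial * h ^ (p + q))⁻¹ := by
  have hcard : #((Ico m n).erase i) = p + q := by
    rw [card_erase_of_mem (by rw [mem_Ico]; omega), Int.card_Ico]
    omega
  have hdiff (j : ℤ) : equispacedNode a h i - equispacedNode a h j = (i - j) * h := by
    simp only [equispacedNode]
    ring
  rw [Lagrange.nodalWeight, prod_inv_distrib]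
  simp only [hdiff]
  rw [prod_mul_distrib, prod_const, hcard, prod_Ico_erase_intCast_sub hp hq]

variable [CharZero K]

lemma equispacedNode_injective (a : K) {h : K} (hh : h ≠ 0) :
    Function.Injective (equispacedNode a h) := fun i j hij => by
  simpa [equispacedNode, hh] using hij

lemma midpoint_sub_equispacedNode (a h : K) (i : ℤ) :
    a - h / 2 - equispacedNode a h i = -((2 * i + 1 : ℤ) * (h / 2)) := by
  rw [equispacedNode]
  push_cast
  ring

lemma midpoint_ne_equispacedNode (a : K) {h : K} (hh : h ≠ 0) (i : ℤ) :
    a - h / 2 ≠ equispacedNode a h i := by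
  have hodd : ((2 * i + 1 : ℤ) : K) ≠ 0 := Int.cast_ne_zero.mpr (by omega)
  rw [← sub_ne_zero, midpoint_sub_equispacedNode]
  exact neg_ne_zero.mpr (mul_ne_zero hodd (div_ne_zero hh two_ne_zero))

lemma eval_midpoint_nodal_equispacedNode (a h : K) (s : ℕ) :
    (Lagrange.nodal (Ico (-(s : ℤ)) s) (equispacedNode a h)).eval (a - h / 2) =
      (-1) ^ s * (h / 2) ^ (2 * s) * ∏ l ∈ Icc 1 s, (2 * (l : K) - 1) ^ 2 := by
  have hpair (l : ℕ) :
      (a - h / 2 - equispacedNode a h (l - 1)) * (a - h / 2 - equispacedNode a h (-l)) =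
        -(h / 2) ^ 2 * (2 * (l : K) - 1) ^ 2 := by
    simp only [midpoint_sub_equispacedNode]
    push_cast
    ring
  rw [Lagrange.eval_nodal, prod_Ico_neg_eq_prod_Icc_mul]
  simp only [hpair]
  rw [prod_mul_distrib, prod_const, Nat.card_Icc, Nat.add_sub_cancel, neg_pow, pow_mul]

lemma eval_midpoint_basis_equispacedNode (a : K) {h : K} (hh : h ≠ 0) {s p q : ℕ} {i : ℤ}
    (hp : (p : ℤ) = i + s) (hq : (q : ℤ) = s - 1 - i) :
    (Lagrange.basis (Ico (-(s : ℤ)) s) (equispacedNode a h) i).eval (a - h / 2) =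
      (-1) ^ (s + q + 1) * (∏ l ∈ Icc 1 s, (2 * (l : K) - 1) ^ 2) /
        (2 ^ (2 * s - 1) * p.factorial * q.factorial * (2 * i + 1 : ℤ)) := by
  have hodd : ((2 * i + 1 : ℤ) : K) ≠ 0 := Int.cast_ne_zero.mpr (by omega)
  have hp_factorial : (p.factorial : K) ≠ 0 := Nat.cast_ne_zero.mpr p.factorial_ne_zero
  have hq_factorial : (q.factorial : K) ≠ 0 := Nat.cast_ne_zero.mpr q.factorial_ne_zero
  have hsign : (-1 : K) ^ (s + q + 1) * (-1) ^ q = -(-1) ^ s := by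
    rw [← pow_add, neg_one_pow_congr (n := s + 1) (by simp only [Nat.even_iff]; omega), pow_succ]
    ring
  rw [Lagrange.eval_basis_not_at_node (by rw [mem_Ico]; omega) (midpoint_ne_equispacedNode a hh i),
    eval_midpoint_nodal_equispacedNode, nodalWeight_equispacedNode a h (p := p) (by omega) hq,
    midpoint_sub_equispacedNode, show 2 * s - 1 = p + q by omega, show 2 * s = p + q + 1 by omega,
    div_pow, pow_succ h, pow_succ 2]
  field_simp
  linear_combination -(∏ l ∈ Icc 1 s, (2 * (l : K) - 1) ^ 2) * hsign

lemma eval_midpoint_basis_equispacedNode_sub_one (a : K) {h : K} (hh : h ≠ 0) {s l : ℕ}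
    (hl : l ∈ Icc 1 s) :
    (Lagrange.basis (Ico (-(s : ℤ)) s) (equispacedNode a h) (l - 1)).eval (a - h / 2) =
      centralMidpointCoeff K s l := by
  obtain ⟨hl_pos, hl_le⟩ := mem_Icc.mp hl
  have hodd : 2 * (l : K) - 1 ≠ 0 := by
    exact_mod_cast Int.cast_ne_zero.mpr (show 2 * (l : ℤ) - 1 ≠ 0 by omega)
  have hindex : ((2 * ((l : ℤ) - 1) + 1 : ℤ) : K) = 2 * l - 1 := by
    push_cast
    ring
  have hsign : (-1 : K) ^ (s + (s - l) + 1) = (-1) ^ (l + 1) :=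
    neg_one_pow_congr (by simp only [Nat.even_iff]; omega)
  rw [eval_midpoint_basis_equispacedNode a hh (p := s + l - 1) (q := s - l) (by omega) (by omega),
    centralMidpointCoeff, ← mul_prod_erase _ _ hl, hindex, hsign]
  field_simp

lemma eval_midpoint_basis_equispacedNode_neg (a : K) {h : K} (hh : h ≠ 0) {s l : ℕ}
    (hl : l ∈ Icc 1 s) :
    (Lagrange.basis (Ico (-(s : ℤ)) s) (equispacedNode a h) (-l)).eval (a - h / 2) =
      centralMidpointCoeff K s l := by
  obtain ⟨hl_pos, hl_le⟩ := mem_Icc.mp hl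
  have hodd : 2 * (l : K) - 1 ≠ 0 := by
    exact_mod_cast Int.cast_ne_zero.mpr (show 2 * (l : ℤ) - 1 ≠ 0 by omega)
  have hindex : ((2 * -(l : ℤ) + 1 : ℤ) : K) = -(2 * l - 1) := by
    push_cast
    ring
  have hsign : (-1 : K) ^ (s + (s + l - 1) + 1) = (-1) ^ l :=
    neg_one_pow_congr (by simp only [Nat.even_iff]; omega)
  rw [eval_midpoint_basis_equispacedNode a hh (p := s - l) (q := s + l - 1) (by omega) (by omega),
    centralMidpointCoeff, ← mul_prod_erase _ _ hl, hindex, hsign]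
  field_simp
  ring

theorem central_midpoint_interpolation_general (s : ℕ) {h : K} (hh : h ≠ 0) (a : K) (u : ℤ → K)
    (q : K[X]) (hdeg : q.degree < (2 * s : ℕ))
    (hq : ∀ i ∈ Ico (-(s : ℤ)) s, q.eval (equispacedNode a h i) = u i) :
    q.eval (a - h / 2) =
      ∑ l ∈ Icc 1 s, centralMidpointCoeff K s l * (u ((l : ℤ) - 1) + u (-(l : ℤ))) := by
  have hcard : #(Ico (-(s : ℤ)) s) = 2 * s := by
    rw [Int.card_Ico]
    omega
  rw [Lagrange.eq_interpolate_of_eval_eq u (equispacedNode_injective a hh).injOn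
      (by rwa [hcard]) hq, Lagrange.interpolate_apply, eval_finsetSum,
    sum_Ico_neg_eq_sum_Icc_add]
  refine sum_congr rfl fun l hl => ?_
  simp only [eval_mul, eval_C, eval_midpoint_basis_equispacedNode_sub_one a hh hl,
    eval_midpoint_basis_equispacedNode_neg a hh hl]
  ring

end EquispacedInterpolation

/-- Central interpolation of degree `2s − 1` at the midpoint of the two middle nodes of a
symmetric equispaced stencil of `2s` points: the value is `∑ₗ βₗ (u_{l−1} + u_{−l})` with the
explicit coefficients
`βₗ = (−1)^{l+1} (2l−1) ∏_{m≠l} (2m−1)² / (2^{2s−1} (s+l−1)! (s−l)!)`. -/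
theorem central_midpoint_interpolation (s : ℕ) (hs : 1 ≤ s) (h a : ℝ) (hh : 0 < h)
    (u : ℤ → ℝ) (q : Polynomial ℝ) (hdeg : q.degree ≤ (2 * s - 1 : ℕ))
    (hq : ∀ i : ℤ, -(s : ℤ) ≤ i → i ≤ (s : ℤ) - 1 → q.eval (a + (i : ℝ) * h) = u i) :
    q.eval (a - h / 2) =
      ∑ l ∈ Finset.Icc 1 s,
        ((-1 : ℝ) ^ (l + 1) * (2 * (l : ℝ) - 1) *
            (∏ m ∈ (Finset.Icc 1 s).erase l, (2 * (m : ℝ) - 1) ^ 2) /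
          (2 ^ (2 * s - 1) * (Nat.factorial (s + l - 1) : ℝ) * (Nat.factorial (s - l) : ℝ))) *
        (u ((l : ℤ) - 1) + u (-(l : ℤ))) := by
  refine central_midpoint_interpolation_general s hh.ne' a u q (hdeg.trans_lt ?_) fun i hi => ?_
  · exact_mod_cast (by omega : 2 * s - 1 < 2 * s)
  · obtain ⟨hi_ge, hi_lt⟩ := Finset.mem_Ico.mp hi
    exact hq i hi_ge (by omega)
end
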